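/- arXiv:1702.07104 — 3 statements merged into one kernel-verified Lean document; each statement's English description precedes it below -/
import Mathlib

section
/- The abelianization Ad(Q_W)_Ab of the adjoint group Ad(Q_W) is a free abelian group with basis {[e_s] : s ∈ R_W}, where [g] denotes the image of g in the abelianization. In particular, Ad(Q_W)_Ab is isomorphic to ℤ^{c(W)}. -/
open Quandles Rack CoxeterSystem

variable {B : Type} [Fintype B] {W : Type} [Group W] {M : CoxeterMatrix B}

/-- The Coxeter quandle `Q_W`: the set of reflections of `W`, with operation given by
conjugation. (Since reflections are involutions, `x ◃ y = x y x⁻¹ = x⁻¹ y x`.) -/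
def CoxeterQuandle (cs : CoxeterSystem M W) : Type := {w : W // cs.IsReflection w}

instance (cs : CoxeterSystem M W) : Quandle (CoxeterQuandle cs) where
  act x y := ⟨x.1 * y.1 * x.1⁻¹, y.2.conj x.1⟩
  self_distrib := by
    rintro ⟨x, _⟩ ⟨y, _⟩ ⟨z, _⟩
    apply Subtype.ext
    show x * (y * z * y⁻¹) * x⁻¹ = (x * y * x⁻¹) * (x * z * x⁻¹) * (x * y * x⁻¹)⁻¹
    group
  invAct x y := ⟨x.1⁻¹ * y.1 * x.1, by simpa using y.2.conj x.1⁻¹⟩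
  left_inv := by
    rintro ⟨x, _⟩ ⟨y, _⟩
    apply Subtype.ext
    show x⁻¹ * (x * y * x⁻¹) * x = y
    group
  right_inv := by
    rintro ⟨x, _⟩ ⟨y, _⟩
    apply Subtype.ext
    show x * (x⁻¹ * y * x) * x⁻¹ = y
    group
  fix := by
    rintro ⟨x, hx⟩
    apply Subtype.ext
    show x * x * x⁻¹ = x
    group

/-- The canonical generator `e_x` of the adjoint (enveloping) group `Ad(Q_W)` of the
Coxeter quandle, associated with the reflection `x`. -/
def coxE (cs : CoxeterSystem M W) (x : CoxeterQuandle cs) :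
    EnvelGroup (CoxeterQuandle cs) :=
  Rack.toEnvelGroup (CoxeterQuandle cs) x

/-!
A homomorphism from `Ad(Q)` to a commutative group `A` is a function `f : Q → A` with
`f (x ◃ y) = f y`, that is, a function on the set of orbits of the inner automorphisms of `Q`. Hence
the abelianization of `Ad(Q)` has the universal property of the free abelian group on these orbits,
for every rack `Q`. The orbits of the Coxeter quandle are the conjugacy classes of reflections,
because conjugations by the simple reflections generate all conjugations.
-/

section Rack

/-- The set of orbits of a rack `Q` under its group of inner automorphisms, which is generated by
the permutations `y ↦ x ◃ y`; hence it is encoded as the quotient of `Q` identifying each `y` with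
all the `x ◃ y`. -/
def RackOrbits (Q : Type*) [Rack Q] : Type _ :=
  Quot fun y y' : Q => ∃ x, x ◃ y = y'

variable {Q : Type*} [Rack Q]

namespace RackOrbits

/-- The orbit of an element of a rack. -/
def mk (x : Q) : RackOrbits Q :=
  Quot.mk _ x

theorem mk_surjective : Function.Surjective (mk : Q → RackOrbits Q) :=
  Quot.mk_surjective

theorem mk_act (x y : Q) : mk (x ◃ y) = mk y :=
  (Quot.sound ⟨x, rfl⟩).symm

/-- The map on orbits induced by a function that is invariant under inner automorphisms. -/
def lift {α : Type*} (f : Q → α) (hf : ∀ x y, f (x ◃ y) = f y) : RackOrbits Q → α :=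
  Quot.lift f fun _ _ ⟨x, hx⟩ => hx ▸ (hf x _).symm

@[simp]
theorem lift_mk {α : Type*} (f : Q → α) (hf : ∀ x y, f (x ◃ y) = f y) (x : Q) :
    lift f hf (mk x) = f x :=
  rfl

/-- A function on the orbits with values in a commutative group, viewed as a rack homomorphism to
the conjugation quandle of that group (whose operation is trivial). -/
def toConj {A : Type*} [CommGroup A] (f : RackOrbits Q → A) : Q →◃ Quandle.Conj A where
  toFun x := f (mk x)
  map_act' {x y} := by
    rw [mk_act, Quandle.conj_act_eq_conj]
    exact (mul_inv_cancel_comm (f (mk x)) (f (mk y))).symm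

end RackOrbits

/-- The class `[e_x]` of the canonical generator `e_x` in the abelianized enveloping group, which
is written additively so that it is a `ℤ`-module. -/
def envelClass (x : Q) : Additive (Abelianization (EnvelGroup Q)) :=
  Additive.ofMul (Abelianization.of (toEnvelGroup Q x))

theorem envelClass_act (x y : Q) : envelClass (x ◃ y) = envelClass y := by
  have conj_eq : toEnvelGroup Q (x ◃ y) =
      toEnvelGroup Q x * toEnvelGroup Q y * (toEnvelGroup Q x)⁻¹ :=
    (toEnvelGroup Q).map_act
  refine congrArg Additive.ofMul ?_
  rw [conj_eq, map_mul, map_mul, map_inv, mul_inv_cancel_comm]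

theorem envelGroup_hom_ext {G : Type*} [Group G] {f g : EnvelGroup Q →* G}
    (h : ∀ x, f (toEnvelGroup Q x) = g (toEnvelGroup Q x)) : f = g :=
  toEnvelGroup.map.symm.injective (ShelfHom.ext (funext h))

theorem abelianization_envelGroup_hom_ext {A : Type*} [AddCommGroup A]
    {f g : Additive (Abelianization (EnvelGroup Q)) →+ A}
    (h : ∀ x, f (envelClass x) = g (envelClass x)) : f = g :=
  AddMonoidHom.toMultiplicativeRight.injective <|
    Abelianization.hom_ext _ _ <| envelGroup_hom_ext h

/-- The homomorphism from the abelianized enveloping group to the free abelian group on the orbits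
that sends `[e_x]` to the orbit of `x`. -/
def abelianizationEnvelGroupToFree :
    Additive (Abelianization (EnvelGroup Q)) →+ FreeAbelianGroup (RackOrbits Q) :=
  MonoidHom.toAdditiveLeft <| Abelianization.lift <| toEnvelGroup.map <|
    RackOrbits.toConj fun o => Multiplicative.ofAdd (FreeAbelianGroup.of o)

theorem abelianizationEnvelGroupToFree_envelClass (x : Q) :
    abelianizationEnvelGroupToFree (envelClass x) = FreeAbelianGroup.of (RackOrbits.mk x) :=
  rfl

/-- The abelianized enveloping group of a rack is free abelian on the orbits: the two have the same
universal property. -/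
def abelianizationEnvelGroupEquivFree :
    Additive (Abelianization (EnvelGroup Q)) ≃+ FreeAbelianGroup (RackOrbits Q) :=
  AddMonoidHom.toAddEquiv abelianizationEnvelGroupToFree
    (FreeAbelianGroup.lift (RackOrbits.lift envelClass envelClass_act))
    (abelianization_envelGroup_hom_ext fun x => by
      simp [abelianizationEnvelGroupToFree_envelClass])
    (FreeAbelianGroup.lift_ext _ _ <| RackOrbits.mk_surjective.forall.2 fun x => by
      simp [abelianizationEnvelGroupToFree_envelClass])

/-- The basis of the abelianized enveloping group of a rack given by the classes `[e_x]`, one for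
each orbit. -/
noncomputable def abelianizationEnvelGroupBasis :
    Module.Basis (RackOrbits Q) ℤ (Additive (Abelianization (EnvelGroup Q))) :=
  .ofRepr (abelianizationEnvelGroupEquivFree.trans
    (FreeAbelianGroup.equivFinsupp (RackOrbits Q))).toIntLinearEquiv

theorem abelianizationEnvelGroupBasis_mk (x : Q) :
    abelianizationEnvelGroupBasis (RackOrbits.mk x) = envelClass x := by
  apply abelianizationEnvelGroupBasis.repr.injective
  rw [Module.Basis.repr_self]
  exact (FreeAbelianGroup.toFinsupp_of (RackOrbits.mk x)).symm

end Rack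

section Coxeter

omit [Fintype B]

namespace CoxeterQuandle

variable {cs : CoxeterSystem M W}

/-- The conjugation action of a Coxeter group on its reflections; it extends the quandle operation,
which only involves conjugation by reflections. -/
instance : MulAction W (CoxeterQuandle cs) where
  smul w x := ⟨w * x.1 * w⁻¹, x.2.conj w⟩
  one_smul x := Subtype.ext <| show 1 * x.1 * 1⁻¹ = x.1 by group
  mul_smul w w' x := Subtype.ext <|
    show w * w' * x.1 * (w * w')⁻¹ = w * (w' * x.1 * w'⁻¹) * w⁻¹ by group

theorem orbit_mk_smul (w : W) (x : CoxeterQuandle cs) :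
    RackOrbits.mk (w • x) = RackOrbits.mk x := by
  induction w using cs.simple_induction generalizing x with
  | simple i => exact RackOrbits.mk_act ⟨cs.simple i, cs.isReflection_simple i⟩ x
  | one => rw [one_smul]
  | mul w w' hw hw' => rw [mul_smul, hw, hw']

theorem conjClasses_mk_act (x y : CoxeterQuandle cs) :
    ConjClasses.mk (x ◃ y).1 = ConjClasses.mk y.1 :=
  (ConjClasses.mk_eq_mk_iff_isConj.2 (isConj_iff.2 ⟨x.1, rfl⟩)).symm

theorem orbit_mk_eq_mk_iff_isConj {x y : CoxeterQuandle cs} :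
    RackOrbits.mk x = RackOrbits.mk y ↔ IsConj x.1 y.1 := by
  constructor
  · intro h
    let conjClass : RackOrbits (CoxeterQuandle cs) → ConjClasses W :=
      RackOrbits.lift (fun z => ConjClasses.mk z.1) conjClasses_mk_act
    exact ConjClasses.mk_eq_mk_iff_isConj.1 (congrArg conjClass h)
  · intro h
    obtain ⟨w, hw⟩ := isConj_iff.1 h
    have smul_eq : w • x = y := Subtype.ext hw
    rw [← smul_eq, orbit_mk_smul]

end CoxeterQuandle

theorem stmt_3_general (cs : CoxeterSystem M W) {ι : Type*} (r : ι → CoxeterQuandle cs)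
    (hr : ∀ t : CoxeterQuandle cs, ∃! i, IsConj (r i).1 t.1) :
    ∃ b : Module.Basis ι ℤ (Additive (Abelianization (EnvelGroup (CoxeterQuandle cs)))),
      ∀ i, b i = Additive.ofMul (Abelianization.of (coxE cs (r i))) := by
  simp only [← CoxeterQuandle.orbit_mk_eq_mk_iff_isConj] at hr
  have mk_r_bijective : Function.Bijective fun i => RackOrbits.mk (r i) :=
    (Function.bijective_iff_existsUnique _).2 (RackOrbits.mk_surjective.forall.2 hr)
  refine ⟨abelianizationEnvelGroupBasis.reindex (Equiv.ofBijective _ mk_r_bijective).symm,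
    fun i => ?_⟩
  rw [Module.Basis.reindex_apply]
  exact abelianizationEnvelGroupBasis_mk (r i)

end Coxeter

/-- Let `R_W ⊆ S` be a complete set of representatives of the `W`-conjugacy classes of
reflections. Then the abelianization of `Ad(Q_W)` is a free abelian group with basis
`{[e_s] : s ∈ R_W}`; in particular it is isomorphic to `ℤ^{c(W)}`. -/
theorem stmt_3 [DecidableEq B] (cs : CoxeterSystem M W) (R : Finset B)
    (hR : ∀ t : W, cs.IsReflection t → ∃! s : R, IsConj (cs.simple s) t) :
    ∃ e : Abelianization (EnvelGroup (CoxeterQuandle cs)) ≃* Multiplicative (R → ℤ),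
      ∀ s : R, e (Abelianization.of (coxE cs ⟨cs.simple s, cs.isReflection_simple s⟩)) =
        Multiplicative.ofAdd (Pi.single s 1) := by
  obtain ⟨b, hb⟩ := stmt_3_general cs
    (fun s : R => ⟨cs.simple s, cs.isReflection_simple s⟩) fun t => hR t.1 t.2
  refine ⟨b.equivFun.toAddEquiv.toMultiplicativeRight, fun s => ?_⟩
  change Multiplicative.ofAdd (b.equivFun (Additive.ofMul _)) = _
  rw [← hb, b.equivFun_apply, b.repr_self, Finsupp.single_eq_pi_single]
end

section
/- The kernel C_W of the canonical surjection φ : Ad(Q_W) → W, e_x ↦ x, is contained in the center of Ad(Q_W). -/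
open Quandles Rack CoxeterSystem

variable {B : Type} [Fintype B] {W : Type} [Group W] {M : CoxeterMatrix B}

/-!
The adjoint group `Ad(R)` of a rack acts on `R`, and conjugation by `g` sends `e_x` to `e_{g • x}`.
Hence an element acting trivially commutes with every generator `e_x`, so it is central. If a
homomorphism `φ` on `Ad(R)` separates the generators, then `φ g = 1` gives `φ(e_{g • x}) = φ(e_x)`,
so `g` acts trivially. For the Coxeter quandle, `φ(e_x) = x`.
-/

section EnvelopingGroup

variable {R G : Type*} [Rack R] [Group G]

theorem closure_range_toEnvelGroup : Subgroup.closure (Set.range (toEnvelGroup R)) = ⊤ := by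
  refine (Subgroup.eq_top_iff' _).2 fun g => Quotient.inductionOn g fun a => ?_
  induction a with
  | unit => exact one_mem _
  | incl x => exact Subgroup.subset_closure ⟨x, rfl⟩
  | mul a b iha ihb => exact mul_mem iha ihb
  | inv a iha => exact inv_mem iha

theorem toEnvelGroup_envelAction (g : EnvelGroup R) (x : R) :
    toEnvelGroup R (envelAction g x) = g * toEnvelGroup R x * g⁻¹ := by
  have hg : g ∈ Subgroup.closure (Set.range (toEnvelGroup R)) := by
    rw [closure_range_toEnvelGroup]
    exact Subgroup.mem_top g
  induction hg using Subgroup.closure_induction generalizing x with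
  | mem _ hy =>
    obtain ⟨y, rfl⟩ := hy
    exact (toEnvelGroup R).map_act
  | one => simp
  | mul a b _ _ iha ihb => rw [map_mul, Equiv.Perm.mul_apply, iha, ihb]; group
  | inv a _ iha =>
    obtain ⟨y, rfl⟩ := (envelAction a).surjective x
    rw [map_inv, Equiv.Perm.inv_def, Equiv.symm_apply_apply, iha]
    group

theorem ker_envelAction_le_center :
    (envelAction : EnvelGroup R →* R ≃ R).ker ≤ Subgroup.center (EnvelGroup R) := by
  intro g hg
  simp only [Subgroup.center_eq_infi' closure_range_toEnvelGroup, Subgroup.mem_iInf,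
    Subtype.forall, Set.forall_mem_range, Subgroup.mem_centralizer_singleton_iff]
  intro x
  have hconj := toEnvelGroup_envelAction g x
  rw [MonoidHom.mem_ker.1 hg, Equiv.Perm.one_apply] at hconj
  exact (eq_mul_inv_iff_mul_eq.1 hconj).symm

theorem ker_le_ker_envelAction (φ : EnvelGroup R →* G)
    (hφ : Function.Injective (φ ∘ toEnvelGroup R)) :
    φ.ker ≤ (envelAction : EnvelGroup R →* R ≃ R).ker := by
  intro g hg
  ext x
  apply hφ
  calc φ (toEnvelGroup R (envelAction g x))
      = φ g * φ (toEnvelGroup R x) * (φ g)⁻¹ := by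
        rw [toEnvelGroup_envelAction, map_mul, map_mul, map_inv]
    _ = φ (toEnvelGroup R x) := by
        rw [MonoidHom.mem_ker.1 hg, one_mul, inv_one, mul_one]

theorem stmt_4_general (φ : EnvelGroup R →* G)
    (hφ : Function.Injective (φ ∘ toEnvelGroup R)) :
    φ.ker ≤ Subgroup.center (EnvelGroup R) :=
  (ker_le_ker_envelAction φ hφ).trans ker_envelAction_le_center

end EnvelopingGroup

/-- The kernel `C_W` of the canonical surjection `φ : Ad(Q_W) → W`, `e_x ↦ x`, is contained
in the center of `Ad(Q_W)`. -/
theorem stmt_4 (cs : CoxeterSystem M W)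
    (φ : EnvelGroup (CoxeterQuandle cs) →* W)
    (hφ : ∀ x : CoxeterQuandle cs, φ (coxE cs x) = x.1) :
    φ.ker ≤ Subgroup.center (EnvelGroup (CoxeterQuandle cs)) :=
  stmt_4_general φ fun x y hxy => Subtype.ext ((hφ x).symm.trans (hxy.trans (hφ y)))
end

section
/- The central subgroup C_W = ker φ of Ad(Q_W) is a free abelian group with basis {e_s² : s ∈ R_W}. In particular C_W ≅ ℤ^{c(W)}, so Ad(Q_W) is a central extension of W by the free abelian group ℤ^{c(W)}. -/
open Quandles Rack CoxeterSystem

variable {B : Type} [Fintype B] {W : Type} [Group W] {M : CoxeterMatrix B}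

/-!
`Ad(Q_W)` acts on `Q_W` by permutations with `g e_x g⁻¹ = e_{g • x}`, and applying `φ` gives
`g • x = φ(g) x φ(g)⁻¹`. So conjugation by `g` permutes the generators `e_x` in a way that depends
only on `φ(g)`. Hence `C_W` is central, and `e_x²`, which lies in `C_W`, depends only on the
conjugacy class of `x`.

Let `N ≤ C_W` be the subgroup generated by the `e_x²`. If `(st)^m = 1` for simple reflections `s, t`
and `k = ⌊m / 2⌋`, then the conjugate `(st)^k s (st)^{-k} = (st)^{2k} s` is `s` or `t`, according to
the parity of `m`. The corresponding conjugation relation holds between the generators of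
`Ad(Q_W)`, and modulo `N`, where these are involutions, it says that `(e_s e_t)^m = 1`. So
`s ↦ e_s` defines a homomorphism `W → Ad(Q_W) / N`, and therefore `C_W = N`.

The `e_s²` with `s ∈ R_W` are independent because the homomorphism from `Ad(Q_W)` to the free
abelian group on `R_W` that sends `e_x` to the representative of the class of `x` sends `e_s²`
to `2s`.
-/

section Center

variable {G : Type*} [Group G] {N : Subgroup G}

theorem normal_of_le_center (hN : N ≤ Subgroup.center G) : N.Normal :=
  ⟨fun n hn g ↦ by rwa [Subgroup.mem_center_iff.mp (hN hn) g, mul_inv_cancel_right]⟩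

theorem isMulCommutative_of_le_center (hN : N ≤ Subgroup.center G) : IsMulCommutative N :=
  .of_setLike_mul_comm fun x _ _ hy ↦ Subgroup.mem_center_iff.mp (hN hy) x

end Center

section FreeAbelian

open Multiplicative

variable {A ι : Type*}

theorem exists_mulEquiv_finsupp [CommGroup A] {z : ι → A}
    (hz : Subgroup.closure (Set.range z) = ⊤) {χ : A →* Multiplicative (ι →₀ ℤ)} {n : ℤ}
    (hn : n ≠ 0) (hχ : ∀ i, χ (z i) = ofAdd (Finsupp.single i n)) :
    ∃ e : A ≃* Multiplicative (ι →₀ ℤ), ∀ i, e (z i) = ofAdd (Finsupp.single i 1) := by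
  have hindep : LinearIndependent ℤ fun i ↦ Additive.ofMul (z i) := by
    have hcomp : (MonoidHom.toAdditiveLeft χ).toIntLinearMap ∘ (fun i ↦ Additive.ofMul (z i)) =
        fun i ↦ Finsupp.single i n := funext fun i ↦ congrArg toAdd (hχ i)
    refine .of_comp (MonoidHom.toAdditiveLeft χ).toIntLinearMap ?_
    rw [hcomp]
    exact Finsupp.linearIndependent_single_of_ne_zero fun _ ↦ hn
  have hspan : ⊤ ≤ Submodule.span ℤ (Set.range fun i ↦ Additive.ofMul (z i)) := by
    have hset : (Set.range fun i ↦ Additive.ofMul (z i)) = Additive.toMul ⁻¹' Set.range z := rfl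
    rw [hset, ← AddSubgroup.toIntSubmodule_closure, ← Subgroup.toAddSubgroup_closure, hz]
    exact fun _ _ ↦ trivial
  let b := Module.Basis.mk hindep hspan
  refine ⟨AddEquiv.toMultiplicativeRight b.repr.toAddEquiv, fun i ↦ congrArg ofAdd ?_⟩
  have hb : b i = Additive.ofMul (z i) := Module.Basis.mk_apply hindep hspan i
  change b.repr (Additive.ofMul (z i)) = Finsupp.single i 1
  rw [← hb, b.repr_self]

open scoped IsMulCommutative in
theorem exists_mulEquiv_finsupp_of_closure_range_eq [Group A] {C : Subgroup A} [IsMulCommutative C]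
    {z : ι → A} (hz : Subgroup.closure (Set.range z) = C) {χ : A →* Multiplicative (ι →₀ ℤ)}
    {n : ℤ} (hn : n ≠ 0) (hχ : ∀ i, χ (z i) = ofAdd (Finsupp.single i n)) :
    ∃ e : C ≃* Multiplicative (ι →₀ ℤ),
      ∀ i (h : z i ∈ C), e ⟨z i, h⟩ = ofAdd (Finsupp.single i 1) := by
  subst hz
  let z' (i : ι) : Subgroup.closure (Set.range z) := ⟨z i, Subgroup.subset_closure ⟨i, rfl⟩⟩
  have hrange : Set.range z' = Subtype.val ⁻¹' Set.range z := by
    ext x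
    simp only [z', Set.mem_range, Set.mem_preimage, Subtype.ext_iff]
  have hz' : Subgroup.closure (Set.range z') = ⊤ :=
    hrange ▸ Subgroup.closure_closure_coe_preimage
  obtain ⟨e, he⟩ := exists_mulEquiv_finsupp hz' (χ := χ.comp (Subgroup.subtype _)) hn hχ
  exact ⟨e, fun i _ ↦ he i⟩

end FreeAbelian

theorem conj_mul_pow_of_sq_eq_one {G : Type*} [Group G] {a b : G} (ha : a ^ 2 = 1)
    (hb : b ^ 2 = 1) (k : ℕ) :
    (a * b) ^ k * a * ((a * b) ^ k)⁻¹ = (a * b) ^ (2 * k) * a := by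
  have hinv : SemiconjBy a (a * b)⁻¹ (a * b) := by
    have ha_inv : a⁻¹ = a := inv_eq_of_mul_eq_one_left (pow_two a ▸ ha)
    have hb_inv : b⁻¹ = b := inv_eq_of_mul_eq_one_left (pow_two b ▸ hb)
    rw [SemiconjBy, mul_inv_rev, ha_inv, hb_inv, mul_assoc]
  have hpow : a * ((a * b) ^ k)⁻¹ = (a * b) ^ k * a := inv_pow (a * b) k ▸ hinv.pow_right k
  rw [mul_assoc, hpow, ← mul_assoc, ← pow_add, two_mul]

section EnvelGroup

variable {Q G H : Type*} [Rack Q] [Group G] [Group H]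

/-- The generator `e_x` of the enveloping group `Ad(Q)`, as an element of the group itself rather
than of its conjugation quandle, which is where `Rack.toEnvelGroup` takes its values. -/
def envelGen (x : Q) : EnvelGroup Q :=
  toEnvelGroup Q x

theorem envelGen_act (x y : Q) :
    envelGen (x ◃ y) = envelGen x * envelGen y * (envelGen x)⁻¹ :=
  (toEnvelGroup Q).map_act

theorem closure_range_envelGen : Subgroup.closure (Set.range (envelGen (Q := Q))) = ⊤ := by
  rw [eq_top_iff]
  rintro ⟨g⟩ -
  induction g with
  | unit => exact one_mem _
  | incl x => exact Subgroup.subset_closure ⟨x, rfl⟩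
  | mul a b ha hb => exact mul_mem ha hb
  | inv a ha => exact inv_mem ha

/-- The homomorphism `Ad(Q) → A` to a commutative group with `e_x ↦ c x`, for a function `c` that
is constant on the orbits of `Q`. -/
def envelLiftOfInvariant {A : Type*} [CommGroup A] (c : Q → A) (hc : ∀ x y, c (x ◃ y) = c y) :
    EnvelGroup Q →* A :=
  toEnvelGroup.map
    { toFun := c
      map_act' := fun {x y} ↦ by rw [Quandle.conj_act_eq_conj, mul_inv_cancel_comm, hc] }

theorem envelLiftOfInvariant_envelGen {A : Type*} [CommGroup A] (c : Q → A)
    (hc : ∀ x y, c (x ◃ y) = c y) (x : Q) : envelLiftOfInvariant c hc (envelGen x) = c x :=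
  rfl

theorem mul_envelGen_mul_inv (g : EnvelGroup Q) (x : Q) :
    g * envelGen x * g⁻¹ = envelGen (envelAction g x) := by
  have hg : g ∈ Subgroup.closure (Set.range (envelGen (Q := Q))) := by
    rw [closure_range_envelGen]
    exact Subgroup.mem_top g
  induction hg using Subgroup.closure_induction generalizing x with
  | mem _ h =>
    obtain ⟨y, rfl⟩ := h
    exact (envelGen_act y x).symm
  | one => simp only [one_mul, inv_one, mul_one, map_one, Equiv.Perm.one_apply]
  | mul a b _ _ ha hb =>
    rw [map_mul, Equiv.Perm.mul_apply, ← ha, ← hb]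
    group
  | inv a _ ha =>
    have h := ha (envelAction a⁻¹ x)
    rw [← Equiv.Perm.mul_apply, ← map_mul, mul_inv_cancel, map_one, Equiv.Perm.one_apply] at h
    rw [← h]
    group

variable {φ : EnvelGroup Q →* G} (hφ : Function.Injective fun x ↦ φ (envelGen x))
include hφ

theorem mul_envelGen_mul_inv_eq_of_map_eq {g : EnvelGroup Q} {x y : Q}
    (h : φ g * φ (envelGen x) * (φ g)⁻¹ = φ (envelGen y)) :
    g * envelGen x * g⁻¹ = envelGen y := by
  rw [mul_envelGen_mul_inv]
  refine congrArg envelGen (hφ ?_)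
  beta_reduce
  rw [← h, ← mul_envelGen_mul_inv, map_mul, map_mul, map_inv]

theorem ker_le_center_of_injective : φ.ker ≤ Subgroup.center (EnvelGroup Q) := by
  intro z hz
  rw [← Subgroup.centralizer_univ, ← Subgroup.coe_top, ← closure_range_envelGen,
    Subgroup.centralizer_closure, Subgroup.mem_centralizer_iff]
  rintro _ ⟨x, rfl⟩
  have hconj : z * envelGen x * z⁻¹ = envelGen x := by
    apply mul_envelGen_mul_inv_eq_of_map_eq hφ
    rw [MonoidHom.mem_ker.mp hz, one_mul, inv_one, mul_one]
  exact (mul_inv_eq_iff_eq_mul.mp hconj).symm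

theorem closure_range_envelGen_comp {S : Type*} {σ : S → Q}
    (hgen : Subgroup.closure (Set.range fun s ↦ φ (envelGen (σ s))) = ⊤)
    (hconj : ∀ x, ∃ s, IsConj (φ (envelGen (σ s))) (φ (envelGen x))) :
    Subgroup.closure (Set.range fun s ↦ envelGen (σ s)) = ⊤ := by
  set P := Subgroup.closure (Set.range fun s ↦ envelGen (σ s))
  have hP : P.map φ = ⊤ := by
    rw [MonoidHom.map_closure, ← Set.range_comp]
    exact hgen
  rw [eq_top_iff, ← closure_range_envelGen, Subgroup.closure_le]
  rintro _ ⟨x, rfl⟩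
  obtain ⟨s, hs⟩ := hconj x
  obtain ⟨w, hw⟩ := isConj_iff.mp hs
  obtain ⟨p, hp, rfl⟩ : w ∈ P.map φ := hP ▸ Subgroup.mem_top w
  rw [← mul_envelGen_mul_inv_eq_of_map_eq hφ hw]
  exact mul_mem (mul_mem hp (Subgroup.subset_closure ⟨s, rfl⟩)) (inv_mem hp)

variable (hsq : ∀ x, φ (envelGen x) ^ 2 = 1)
include hsq

theorem envelGen_sq_eq_of_isConj (hsurj : Function.Surjective φ) {x y : Q}
    (h : IsConj (φ (envelGen x)) (φ (envelGen y))) : envelGen x ^ 2 = envelGen y ^ 2 := by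
  obtain ⟨w, hw⟩ := isConj_iff.mp h
  obtain ⟨g, rfl⟩ := hsurj w
  have hcentral : envelGen x ^ 2 ∈ Subgroup.center (EnvelGroup Q) :=
    ker_le_center_of_injective hφ (by rw [MonoidHom.mem_ker, map_pow, hsq])
  rw [← mul_envelGen_mul_inv_eq_of_map_eq hφ hw, conj_pow,
    Subgroup.mem_center_iff.mp hcentral g, mul_inv_cancel_right]

variable {θ : EnvelGroup Q →* H} (hθ : ∀ x, θ (envelGen x) ^ 2 = 1)
include hθ

theorem map_mul_pow_mul_eq_of_map_eq {x y z : Q} {k : ℕ}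
    (h : (φ (envelGen x) * φ (envelGen y)) ^ (2 * k) * φ (envelGen x) = φ (envelGen z)) :
    (θ (envelGen x) * θ (envelGen y)) ^ (2 * k) * θ (envelGen x) = θ (envelGen z) := by
  rw [← conj_mul_pow_of_sq_eq_one (hsq x) (hsq y), ← map_mul, ← map_pow] at h
  rw [← conj_mul_pow_of_sq_eq_one (hθ x) (hθ y), ← mul_envelGen_mul_inv_eq_of_map_eq hφ h,
    map_mul, map_mul, map_inv, map_pow, map_mul]

theorem map_mul_pow_eq_one_of_map_mul_pow_eq_one {x y : Q} {m : ℕ}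
    (h : (φ (envelGen x) * φ (envelGen y)) ^ m = 1) :
    (θ (envelGen x) * θ (envelGen y)) ^ m = 1 := by
  obtain ⟨k, rfl | rfl⟩ := m.even_or_odd'
  · exact mul_eq_right.mp (map_mul_pow_mul_eq_of_map_eq hφ hsq hθ (by rw [h, one_mul]))
  · rw [pow_succ, ← mul_assoc] at h ⊢
    have hy : φ (envelGen y) * φ (envelGen y) = 1 := pow_two (φ (envelGen y)) ▸ hsq y
    rw [map_mul_pow_mul_eq_of_map_eq hφ hsq hθ (mul_right_cancel (h.trans hy.symm)), ← pow_two, hθ]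

end EnvelGroup

namespace CoxeterQuandle

variable {B W : Type} {ι : Type*} [Group W] {M : CoxeterMatrix B}

/-- The simple reflection indexed by `b`, as an element of the Coxeter quandle. -/
def simple (cs : CoxeterSystem M W) (b : B) : CoxeterQuandle cs :=
  ⟨cs.simple b, cs.isReflection_simple b⟩

variable {cs : CoxeterSystem M W}

theorem coe_simple (b : B) : (simple cs b).1 = cs.simple b :=
  rfl

theorem isConj_simple (x : CoxeterQuandle cs) : ∃ b, IsConj (cs.simple b) x.1 := by
  obtain ⟨_, w, b, rfl⟩ := x
  exact ⟨b, isConj_iff.mpr ⟨w, rfl⟩⟩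

theorem exists_hom_envelGen_sq {r : ι → B}
    (hr : ∀ t, cs.IsReflection t → ∃! i, IsConj (cs.simple (r i)) t) :
    ∃ χ : EnvelGroup (CoxeterQuandle cs) →* Multiplicative (ι →₀ ℤ),
      ∀ i, χ (envelGen (simple cs (r i)) ^ 2) = Multiplicative.ofAdd (Finsupp.single i 2) := by
  choose c hc hcu using fun x : CoxeterQuandle cs ↦ hr x.1 x.2
  have hc_act (x y : CoxeterQuandle cs) : c (x ◃ y) = c y :=
    hcu y _ ((hc (x ◃ y)).trans (isConj_iff.mpr ⟨x.1, rfl⟩ : IsConj y.1 (x ◃ y).1).symm)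
  have hc_simple (i : ι) : c (simple cs (r i)) = i := (hcu (simple cs (r i)) i (.refl _)).symm
  refine ⟨envelLiftOfInvariant (fun x ↦ Multiplicative.ofAdd (Finsupp.single (c x) 1))
    fun x y ↦ by rw [hc_act], fun i ↦ ?_⟩
  rw [map_pow, envelLiftOfInvariant_envelGen, hc_simple, ← ofAdd_nsmul, Finsupp.smul_single]
  rfl

variable {φ : EnvelGroup (CoxeterQuandle cs) →* W} (hφ : ∀ x, φ (envelGen x) = x.1)
include hφ

theorem injective_map_envelGen : Function.Injective fun x ↦ φ (envelGen x) :=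
  fun x y h ↦ Subtype.ext (by simpa only [hφ] using h)

theorem map_envelGen_sq (x : CoxeterQuandle cs) : φ (envelGen x) ^ 2 = 1 :=
  hφ x ▸ x.2.pow_two

theorem surjective_of_map_envelGen : Function.Surjective φ := by
  rw [← MonoidHom.range_eq_top, eq_top_iff, ← cs.subgroup_closure_range_simple,
    Subgroup.closure_le]
  rintro _ ⟨b, rfl⟩
  exact ⟨_, hφ (simple cs b)⟩

theorem closure_range_envelGen_simple :
    Subgroup.closure (Set.range fun b ↦ envelGen (simple cs b)) = ⊤ := by
  refine closure_range_envelGen_comp (injective_map_envelGen hφ) ?_ ?_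
  · simpa only [hφ, coe_simple] using cs.subgroup_closure_range_simple
  · simpa only [hφ, coe_simple] using isConj_simple

theorem ker_le_ker_of_envelGen_sq {H : Type*} [Group H]
    {θ : EnvelGroup (CoxeterQuandle cs) →* H} (hθ : ∀ x, θ (envelGen x) ^ 2 = 1) :
    φ.ker ≤ θ.ker := by
  have hlift : M.IsLiftable fun b ↦ θ (envelGen (simple cs b)) := fun b b' ↦
    map_mul_pow_eq_one_of_map_mul_pow_eq_one (injective_map_envelGen hφ) (map_envelGen_sq hφ) hθ
      (by simpa only [hφ, coe_simple] using cs.simple_mul_simple_pow b b')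
  have hfactor : (cs.lift ⟨_, hlift⟩).comp φ = θ := by
    refine MonoidHom.eq_of_eqOn_dense (closure_range_envelGen_simple hφ) ?_
    rintro _ ⟨b, rfl⟩
    rw [MonoidHom.comp_apply, hφ]
    exact cs.lift_apply_simple hlift b
  intro z hz
  rw [MonoidHom.mem_ker, ← hfactor, MonoidHom.comp_apply, MonoidHom.mem_ker.mp hz, map_one]

theorem closure_range_envelGen_sq :
    Subgroup.closure (Set.range fun x : CoxeterQuandle cs ↦ envelGen x ^ 2) = φ.ker := by
  set N := Subgroup.closure (Set.range fun x : CoxeterQuandle cs ↦ envelGen x ^ 2)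
  have hN : N ≤ φ.ker := by
    rw [Subgroup.closure_le]
    rintro _ ⟨x, rfl⟩
    rw [SetLike.mem_coe, MonoidHom.mem_ker, map_pow, map_envelGen_sq hφ]
  have : N.Normal :=
    normal_of_le_center (hN.trans (ker_le_center_of_injective (injective_map_envelGen hφ)))
  refine hN.antisymm ?_
  rw [← QuotientGroup.ker_mk' N]
  refine ker_le_ker_of_envelGen_sq hφ fun x ↦ ?_
  rw [← map_pow]
  exact (QuotientGroup.eq_one_iff _).mpr (Subgroup.subset_closure ⟨x, rfl⟩)

theorem closure_range_envelGen_simple_sq {r : ι → B}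
    (hr : ∀ t, cs.IsReflection t → ∃ i, IsConj (cs.simple (r i)) t) :
    Subgroup.closure (Set.range fun i ↦ envelGen (simple cs (r i)) ^ 2) = φ.ker := by
  rw [← closure_range_envelGen_sq hφ]
  congr 1
  refine subset_antisymm (Set.range_subset_iff.mpr fun i ↦ ⟨_, rfl⟩)
    (Set.range_subset_iff.mpr fun x ↦ ?_)
  obtain ⟨i, hi⟩ := hr x.1 x.2
  refine ⟨i, envelGen_sq_eq_of_isConj (injective_map_envelGen hφ) (map_envelGen_sq hφ)
    (surjective_of_map_envelGen hφ) ?_⟩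
  rwa [hφ, hφ]

end CoxeterQuandle

open CoxeterQuandle in
theorem stmt_6_general {B W : Type} {ι : Type*} [Group W] {M : CoxeterMatrix B}
    (cs : CoxeterSystem M W)
    (φ : EnvelGroup (CoxeterQuandle cs) →* W)
    (hφ : ∀ x : CoxeterQuandle cs, φ (coxE cs x) = x.1)
    (r : ι → B)
    (hr : ∀ t : W, cs.IsReflection t → ∃! i, IsConj (cs.simple (r i)) t) :
    Function.Surjective φ ∧
    φ.ker ≤ Subgroup.center (EnvelGroup (CoxeterQuandle cs)) ∧
    ∃ e : φ.ker ≃* Multiplicative (ι →₀ ℤ),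
      ∀ (i : ι)
        (h : (coxE cs ⟨cs.simple (r i), cs.isReflection_simple (r i)⟩) ^ 2 ∈ φ.ker),
        e ⟨(coxE cs ⟨cs.simple (r i), cs.isReflection_simple (r i)⟩) ^ 2, h⟩ =
          Multiplicative.ofAdd (Finsupp.single i 1) := by
  have hcentral := ker_le_center_of_injective (injective_map_envelGen hφ)
  have : IsMulCommutative φ.ker := isMulCommutative_of_le_center hcentral
  have hgen := closure_range_envelGen_simple_sq hφ fun t ht ↦ (hr t ht).exists
  obtain ⟨χ, hχ⟩ := exists_hom_envelGen_sq hr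
  exact ⟨surjective_of_map_envelGen hφ, hcentral,
    exists_mulEquiv_finsupp_of_closure_range_eq hgen two_ne_zero hχ⟩

/-- The central subgroup `C_W = ker φ` of `Ad(Q_W)` is a free abelian group with basis
`{e_s² : s ∈ R_W}`; in particular `C_W ≅ ℤ^{c(W)}`, so `Ad(Q_W)` is a central extension
of `W` by the free abelian group `ℤ^{c(W)}`. -/
theorem stmt_6 [DecidableEq B] (cs : CoxeterSystem M W)
    (φ : EnvelGroup (CoxeterQuandle cs) →* W)
    (hφ : ∀ x : CoxeterQuandle cs, φ (coxE cs x) = x.1)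
    (R : Finset B)
    (hR : ∀ t : W, cs.IsReflection t → ∃! s : R, IsConj (cs.simple s) t) :
    Function.Surjective φ ∧
    φ.ker ≤ Subgroup.center (EnvelGroup (CoxeterQuandle cs)) ∧
    ∃ e : φ.ker ≃* Multiplicative (R → ℤ),
      ∀ (s : R)
        (h : (coxE cs ⟨cs.simple s, cs.isReflection_simple s⟩) ^ 2 ∈ φ.ker),
        e ⟨(coxE cs ⟨cs.simple s, cs.isReflection_simple s⟩) ^ 2, h⟩ =
          Multiplicative.ofAdd (Pi.single s 1) := by
  obtain ⟨hsurj, hcentral, e, he⟩ := stmt_6_general cs φ hφ (fun s : R ↦ (s : B)) hR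
  exact ⟨hsurj, hcentral,
    e.trans (Finsupp.linearEquivFunOnFinite ℤ ℤ R).toAddEquiv.toMultiplicative,
    fun s h ↦ by simp [he]⟩
end
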